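/- Let n be a natural number and p ∈ [0,1] be such that n·p is an integer m. If X₁, …, Xₙ are independent identically distributed Bernoulli(p) random variables (taking value 1 with probability p and 0 with probability 1−p), then the probability that X₁ + ⋯ + Xₙ ≤ m is at least 1/2. -/

import Mathlib

open MeasureTheory ProbabilityTheory

lemma bm_abstract (N : ℕ) (U D : ℕ → ℝ) (a b : ℝ) (ha : 0 < a) (hb : 0 < b)
    (hU0 : ∀ j, 0 ≤ U j) (hD0 : ∀ j, 0 ≤ D j)
    (hU : ∀ j : ℕ, U (j+1) * (a + 2 + j) * b = U j * (b - 1 - j) * a)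
    (hD : ∀ j : ℕ, D (j+1) * (b + 1 + j) * a = D j * (a - j) * b)
    (h0 : U 0 ≤ D 0)
    (hmean : ∑ j ∈ Finset.range N, (((j:ℝ)+1) * U j - j * D j) = 0) :
    ∑ j ∈ Finset.range N, U j ≤ ∑ j ∈ Finset.range N, D j := by
  by_cases hall : ∀ j, U j ≤ D j
  · exact Finset.sum_le_sum fun j _ => hall j
  push Not at hall
  classical
  obtain ⟨J, hJ, hmin⟩ : ∃ J, D J < U J ∧ ∀ j < J, U j ≤ D j :=
    ⟨Nat.find hall, Nat.find_spec hall, fun j hj => not_lt.1 (Nat.find_min hall hj)⟩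
  obtain _ | i := J
  · exact absurd hJ (not_lt.2 h0)
  have hi := hmin i (Nat.lt_succ_self i)
  have hi0 : (0:ℝ) ≤ i := Nat.cast_nonneg i
  set t : ℝ := i + 1 with ht
  have e1 : U (i+1) * (a + 1 + t) * b = U i * (b - t) * a := by
    have := hU i; rw [ht]; linarith
  have e2 : D (i+1) * (b + t) * a = D i * (a + 1 - t) * b := by
    have := hD i; rw [ht]; linarith
  have ht0 : 0 < t := by positivity
  have hUp : 0 < U (i+1) := (hD0 _).trans_lt hJ
  have hpos : 0 < U i * (b - t) * a := by rw [← e1]; positivity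
  have hpos2 : 0 < U i * (b - t) := pos_of_mul_pos_left hpos ha.le
  have hbt : 0 < b - t := pos_of_mul_pos_right hpos2 (hU0 i)
  have hUi : 0 < U i := pos_of_mul_pos_left hpos2 hbt.le
  have hDi : 0 < D i := hUi.trans_le hi
  have key : b^2 * ((a+1)^2 - t^2) < a^2 * (b^2 - t^2) := by
    have k1 : D i * (b^2 * ((a+1)^2 - t^2)) < D i * (a^2 * (b^2 - t^2)) := by
      calc D i * (b^2 * ((a+1)^2 - t^2)) = (D i * (a + 1 - t) * b) * ((a+1+t) * b) := by ring
        _ = D (i+1) * ((b+t)*a*((a+1+t)*b)) := by rw [← e2]; ring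
        _ < U (i+1) * ((b+t)*a*((a+1+t)*b)) := by
            apply mul_lt_mul_of_pos_right hJ; positivity
        _ = (U i * (b - t) * a) * ((b+t)*a) := by rw [← e1]; ring
        _ = U i * ((b-t) * ((b+t) * a^2)) := by ring
        _ ≤ D i * ((b-t) * ((b+t) * a^2)) := by
            apply mul_le_mul_of_nonneg_right hi; positivity
        _ = _ := by ring
    exact lt_of_mul_lt_mul_left k1 hDi.le
  have hab : 0 < b^2 - a^2 := by
    have : 0 < t^2 * (b^2 - a^2) := by nlinarith [mul_pos (pow_pos hb 2) ha, pow_pos hb 2]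
    exact pos_of_mul_pos_right this (by positivity)
  have hup : ∀ k, D (i+1+k) ≤ U (i+1+k) := by
    intro k
    induction k with
    | zero => exact hJ.le
    | succ k ih =>
      set l := i + 1 + k with hl
      change D (l+1) ≤ U (l+1)
      set s : ℝ := l + 1 with hs
      have hts : t ≤ s := by
        rw [ht, hs, hl]; push_cast; linarith [(Nat.cast_nonneg k : (0:ℝ) ≤ k)]
      have e1 : U (l+1) * (a + 1 + s) * b = U l * (b - s) * a := by
        have := hU l; rw [hs]; linarith
      have e2 : D (l+1) * (b + s) * a = D l * (a + 1 - s) * b := by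
        have := hD l; rw [hs]; linarith
      have hs0 : 0 < s := ht0.trans_le hts
      have keys : b^2 * ((a+1)^2 - s^2) < a^2 * (b^2 - s^2) := by
        have : t^2 ≤ s^2 := by gcongr
        nlinarith [mul_le_mul_of_nonneg_right this hab.le]
      rcases le_or_gt (a + 1 - s) 0 with h | h
      · have : D (l+1) * ((b+s) * a) ≤ 0 := by
          rw [← mul_assoc, e2]
          have := mul_nonneg (mul_nonneg (hD0 l) (neg_nonneg.2 h)) hb.le
          linarith
        have : D (l+1) ≤ 0 := by
          by_contra hc
          push Not at hc
          have : 0 < D (l+1) * ((b+s) * a) := by positivity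
          linarith
        exact this.trans (hU0 _)
      · have hp1 : 0 < b^2 * ((a+1)^2 - s^2) := by
          have : (a+1)^2 - s^2 = (a+1-s)*(a+1+s) := by ring
          rw [this]; positivity
        have hp2 : 0 < a^2 * (b^2 - s^2) := hp1.trans keys
        have hK : 0 < (b+s)*a*((a+1+s)*b) := by positivity
        refine le_of_mul_le_mul_right ?_ hK
        calc D (l+1) * ((b+s)*a*((a+1+s)*b)) = (D (l+1) * (b+s)*a)*((a+1+s)*b) := by ring
          _ = D l * (b^2 * ((a+1)^2 - s^2)) := by rw [e2]; ring
          _ ≤ D l * (a^2 * (b^2 - s^2)) := mul_le_mul_of_nonneg_left keys.le (hD0 l)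
          _ ≤ U l * (a^2 * (b^2 - s^2)) := mul_le_mul_of_nonneg_right ih hp2.le
          _ = (U l * (b - s) * a) * ((b+s)*a) := by ring
          _ = _ := by rw [← e1]; ring
  have hterm : ∀ j ∈ Finset.range N, t * (U j - D j) ≤ ((j:ℝ)+1) * U j - j * D j := by
    intro j _
    have h2 : 0 ≤ ((j:ℝ) - t) * (U j - D j) := by
      rcases lt_or_ge j (i+1) with h | h
      · have h3 : (j:ℝ) + 1 ≤ i + 1 := by exact_mod_cast h
        have := hmin j h
        exact mul_nonneg_of_nonpos_of_nonpos (by linarith) (by linarith)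
      · have h3 : (i:ℝ) + 1 ≤ j := by exact_mod_cast h
        obtain ⟨k, rfl⟩ := Nat.exists_eq_add_of_le h
        have := hup k
        exact mul_nonneg (by linarith) (by linarith)
    nlinarith [hU0 j]
  have := Finset.sum_le_sum hterm
  rw [hmean, ← Finset.mul_sum, Finset.sum_sub_distrib] at this
  have := nonpos_of_mul_nonpos_right this ht0
  linarith

lemma bm_real (n m : ℕ) (p : ℝ) (hp0 : 0 ≤ p) (hp1 : p ≤ 1) (hm : (n : ℝ) * p = (m : ℝ)) :
    1 / 2 ≤ ∑ k ∈ Finset.range (m+1), (n.choose k : ℝ) * p^k * (1-p)^(n-k) := by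
  set w : ℕ → ℝ := fun k => (n.choose k : ℝ) * p^k * (1-p)^(n-k) with hw
  have hq : 0 ≤ 1 - p := by linarith
  have hw0 : ∀ k, 0 ≤ w k := fun k => by simp only [hw]; positivity
  have hmn : m ≤ n := by
    have : (m:ℝ) ≤ n := by rw [← hm]; nlinarith [(Nat.cast_nonneg n : (0:ℝ) ≤ n)]
    exact_mod_cast this
  have hwz : ∀ k, n < k → w k = 0 := fun k hk => by simp [hw, Nat.choose_eq_zero_of_lt hk]
  have hrec : ∀ k : ℕ, w (k+1) * (k+1) * (1-p) = w k * (n - k) * p := by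
    intro k
    rcases lt_trichotomy n k with h | h | h
    · rw [hwz k h, hwz (k+1) (by omega)]; simp
    · rw [hwz (k+1) (by omega), h]; simp
    · have h3 : ((n.choose (k+1) : ℕ) : ℝ) * (k+1) = n.choose k * (n - k) := by
        have := Nat.choose_succ_right_eq n k
        rw [← Nat.cast_sub h.le]; exact_mod_cast this
      have h4 : n - k = (n - (k+1)) + 1 := by omega
      simp only [hw]
      rw [h4, pow_succ, pow_succ]
      linear_combination (p^k * p * (1-p)^(n-(k+1)) * (1-p)) * h3
  have hsum : ∑ k ∈ Finset.range (n+1), w k = 1 := by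
    have := add_pow p (1-p) n
    rw [add_sub_cancel, one_pow] at this
    rw [this]
    exact Finset.sum_congr rfl fun k _ => by simp only [hw]; ring
  have hmean : ∑ k ∈ Finset.range (n+1), ((k:ℝ) - m) * w k = 0 := by
    have h1 : ∑ k ∈ Finset.range (n+1), ((k:ℝ) * w k * (1-p)) =
        ∑ k ∈ Finset.range (n+1), w k * (n - k) * p := by
      rw [Finset.sum_range_succ', Finset.sum_range_succ]
      simp only [Nat.cast_zero, zero_mul, add_zero, sub_self, mul_zero]
      exact Finset.sum_congr rfl fun k _ => by rw [← hrec k]; push_cast; ring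
    have h2 : ∑ k ∈ Finset.range (n+1), ((k:ℝ) - m) * w k =
      ∑ k ∈ Finset.range (n+1), ((k:ℝ) * w k * (1-p)) -
        ∑ k ∈ Finset.range (n+1), w k * (n - k) * p := by
      rw [← Finset.sum_sub_distrib]
      exact Finset.sum_congr rfl fun k _ => by rw [← hm]; ring
    rw [h2, h1, sub_self]
  -- splitting
  have split : ∀ g : ℕ → ℝ, (∀ k, n < k → g k = 0) → ∑ k ∈ Finset.range (n+1), g k =
      ∑ k ∈ Finset.range (m+1), g k + ∑ j ∈ Finset.range (n+1), g (m+1+j) := by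
    intro g hg
    rw [← Finset.sum_range_add]
    refine Finset.sum_subset (by intro x; simp; omega) ?_
    intro x _ hx
    exact hg x (by simpa using hx)
  set D : ℕ → ℝ := fun j => if j ≤ m then w (m - j) else 0 with hDdef
  have refl : ∀ g : ℕ → ℝ, ∑ k ∈ Finset.range (m+1), g k =
      ∑ j ∈ Finset.range (n+1), if j ≤ m then g (m - j) else 0 := by
    intro g
    rw [← Finset.sum_range_reflect, ← Finset.sum_filter]
    refine Finset.sum_congr ?_ fun j _ => by simp
    ext x; simp; omega
  have hfin : ∑ j ∈ Finset.range (n+1), w (m+1+j) ≤ ∑ j ∈ Finset.range (n+1), D j →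
      1 / 2 ≤ ∑ k ∈ Finset.range (m+1), w k := by
    intro h
    have h1 := split w hwz
    have h2 := refl w
    change _ = ∑ j ∈ Finset.range (n+1), D j at h2
    linarith
  have hD0 : ∀ j, 0 ≤ D j := fun j => by
    simp only [hDdef]; split_ifs
    · exact hw0 _
    · exact le_rfl
  apply hfin
  rcases Nat.eq_zero_or_pos m with h | hmpos
  · subst h
    have hz : ∀ k, w (0+1+k) = 0 := by
      intro k
      have : n = 0 ∨ p = 0 := by simpa using hm
      rcases this with h | h
      · exact hwz _ (by omega)
      · simp [hw, h, Nat.add_comm]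
    simp only [hz, Finset.sum_const_zero]
    exact Finset.sum_nonneg fun j _ => hD0 j
  rcases hmn.eq_or_lt with h | hlt
  · have hz : ∀ k, w (m+1+k) = 0 := fun k => hwz _ (by omega)
    simp only [hz, Finset.sum_const_zero]
    exact Finset.sum_nonneg fun j _ => hD0 j
  have ha : (0:ℝ) < m := by exact_mod_cast hmpos
  have hb : (0:ℝ) < (n:ℝ) - m := by
    have : (m:ℝ) < n := by exact_mod_cast hlt
    linarith
  have hrec' : ∀ k : ℕ, w (k+1) * (k+1) * (n - m) = w k * (n - k) * m := by
    intro k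
    rw [← hm]
    linear_combination (n:ℝ) * hrec k
  refine bm_abstract (n+1) (fun j => w (m+1+j)) D m (n - m) ha hb (fun j => hw0 _) hD0
    ?_ ?_ ?_ ?_
  · intro j
    have := hrec' (m+1+j)
    push_cast at this
    change w (m+1+j+1) * _ * _ = w (m+1+j) * _ * _
    linear_combination this
  · intro j
    simp only [hDdef]
    rcases lt_trichotomy j m with h | h | h
    · rw [if_pos h.le, if_pos (by omega : j + 1 ≤ m)]
      obtain ⟨d, rfl⟩ := Nat.exists_eq_add_of_lt h
      have := hrec' d
      rw [show j + d + 1 - (j+1) = d by omega, show j + d + 1 - j = d + 1 by omega]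
      push_cast at this ⊢
      linear_combination -this
    · subst h; simp
    · rw [if_neg (by omega), if_neg (by omega)]; simp
  · have h := hrec' m
    simp only [hDdef, add_zero, Nat.zero_le, if_true, Nat.sub_zero]
    have h2 : w (m+1) * (m+1) = w m * m := by
      apply mul_right_cancel₀ hb.ne'
      linear_combination h
    nlinarith [hw0 m, hw0 (m+1)]
  · have h1 := split (fun k => ((k:ℝ) - m) * w k) (fun k hk => by simp [hwz k hk])
    rw [hmean, refl, ← Finset.sum_add_distrib] at h1
    rw [h1]
    refine Finset.sum_congr rfl fun j _ => ?_
    simp only [hDdef]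
    split_ifs with h
    · rw [Nat.cast_sub h]; push_cast; ring
    · push_cast; ring

/-- If `X₁, …, Xₙ` are i.i.d. Bernoulli(p) random variables and the mean `n·p` is an
integer `m`, then `P(X₁ + ⋯ + Xₙ ≤ m) ≥ 1/2` (the median of a binomial is at most its
mean when the mean is an integer). -/
theorem binomial_median_le_mean
    {Ω : Type*} [MeasurableSpace Ω] (P : Measure Ω) [IsProbabilityMeasure P]
    (n m : ℕ) (p : ℝ) (hp0 : 0 ≤ p) (hp1 : p ≤ 1) (hm : (n : ℝ) * p = (m : ℝ))
    (X : Fin n → Ω → ℝ) (hmeas : ∀ i, Measurable (X i))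
    (hindep : iIndepFun X P)
    (h1 : ∀ i, P {ω | X i ω = 1} = ENNReal.ofReal p)
    (h0 : ∀ i, P {ω | X i ω = 0} = ENNReal.ofReal (1 - p)) :
    (1 : ENNReal) / 2 ≤ P {ω | (∑ i, X i ω) ≤ (m : ℝ)} := by
  classical
  have hq : 0 ≤ 1 - p := by linarith
  let c : Finset (Fin n) → Fin n → ℝ := fun s i => if i ∈ s then 1 else 0
  let A : Finset (Fin n) → Set Ω := fun s => ⋂ i ∈ (Finset.univ : Finset (Fin n)), X i ⁻¹' {c s i}
  have hA : ∀ s ω, ω ∈ A s ↔ ∀ i, X i ω = c s i := by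
    intro s ω; simp [A]
  have hAm : ∀ s, MeasurableSet (A s) := fun s =>
    Finset.measurableSet_biInter _ fun i _ => hmeas i (measurableSet_singleton _)
  have hPA : ∀ s, P (A s) = ENNReal.ofReal (p ^ s.card * (1-p)^(n - s.card)) := by
    intro s
    have e := hindep.measure_inter_preimage_eq_mul (S := Finset.univ)
      (sets := fun i => {c s i}) (fun i _ => measurableSet_singleton _)
    have e2 : ∀ i, P (X i ⁻¹' {c s i}) = ENNReal.ofReal (if i ∈ s then p else 1 - p) := by
      intro i
      by_cases h : i ∈ s
      · simp only [c, h, if_true]; exact h1 i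
      · simp only [c, h, if_false]; exact h0 i
    change P (⋂ i ∈ (Finset.univ : Finset (Fin n)), X i ⁻¹' {c s i}) = _
    rw [e, Finset.prod_congr rfl fun i _ => e2 i, ← ENNReal.ofReal_prod_of_nonneg]
    · congr 1
      rw [Finset.prod_ite, Finset.prod_const, Finset.prod_const]
      congr 2
      · congr 1; ext; simp
      · have : Finset.univ.filter (fun i => i ∉ s) = sᶜ := by ext; simp
        rw [this, Finset.card_compl, Fintype.card_fin]
    · intro i _; split_ifs <;> assumption
  set T : Finset (Finset (Fin n)) := Finset.univ.filter (fun s => s.card < m + 1) with hT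
  have hsub : (⋃ s ∈ T, A s) ⊆ {ω | (∑ i, X i ω) ≤ (m : ℝ)} := by
    intro ω hω
    simp only [Set.mem_iUnion] at hω
    obtain ⟨s, hs, h⟩ := hω
    rw [hA] at h
    have hs' : s.card ≤ m := by simpa [hT, Nat.lt_succ_iff] using hs
    simp only [Set.mem_ofPred_eq, h, c]
    simpa using hs'
  have hdisj : Set.PairwiseDisjoint (T : Set (Finset (Fin n))) A := by
    intro s _ t _ hst
    refine Set.disjoint_left.2 fun ω hs ht => hst ?_
    rw [hA] at hs ht
    ext i
    have := (hs i).symm.trans (ht i)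
    by_cases h : i ∈ s <;> by_cases h' : i ∈ t <;> simp [c, h, h'] at this ⊢
  have hsumT : ∑ s ∈ T, p ^ s.card * (1-p)^(n - s.card) =
      ∑ k ∈ Finset.range (m+1), (n.choose k : ℝ) * p^k * (1-p)^(n-k) := by
    rw [← Finset.sum_fiberwise_of_maps_to (s := T) (t := Finset.range (m+1))
      (g := fun s => s.card) (by intro s hs; simpa [hT] using hs)]
    refine Finset.sum_congr rfl fun k hk => ?_
    have hk' : k < m + 1 := by simpa using hk
    have : T.filter (fun s => s.card = k) = Finset.powersetCard k Finset.univ := by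
      ext s; simp [hT, Finset.mem_powersetCard]; omega
    rw [this, Finset.sum_congr rfl (g := fun _ => p^k * (1-p)^(n-k))
      (fun s hs => by rw [(Finset.mem_powersetCard.1 hs).2])]
    rw [Finset.sum_const, Finset.card_powersetCard, Finset.card_univ, Fintype.card_fin,
      nsmul_eq_mul]
    ring
  calc (1 : ENNReal) / 2 = ENNReal.ofReal (1/2) := by
        rw [ENNReal.ofReal_div_of_pos two_pos]; simp
    _ ≤ ENNReal.ofReal (∑ s ∈ T, p ^ s.card * (1-p)^(n - s.card)) := by
        rw [hsumT]; exact ENNReal.ofReal_le_ofReal (bm_real n m p hp0 hp1 hm)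
    _ = ∑ s ∈ T, P (A s) := by
        rw [ENNReal.ofReal_sum_of_nonneg (fun s _ => by positivity)]
        exact Finset.sum_congr rfl fun s _ => (hPA s).symm
    _ = P (⋃ s ∈ T, A s) := (measure_biUnion_finset hdisj fun s _ => hAm s).symm
    _ ≤ _ := measure_mono hsub
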